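/- Let G be a finite simple graph of order n ≥ 1 and let H be a connected graph of order m with minimum degree δ(H) ≥ 2. Then (2 − m)·n + 2·⌊n/m⌋ ≤ γ_MR(G ∘ H). -/

import Mathlib

open Finset

namespace MRD

variable {V : Type*}

open scoped Classical

/-- Sum of `f` over the closed neighborhood of `v` in `G`:
`f(N[v]) = \sum_{u \in N[v]} f(u)`. -/
noncomputable def closedNbhdSum [Fintype V] (G : SimpleGraph V) (f : V → ℤ) (v : V) : ℤ :=
  ∑ u ∈ Finset.univ.filter (fun u => G.Adj v u ∨ u = v), f u

/-- `f : V → {-1, 1, 2}` is a Majority Roman Dominating Function (MRDF) on `G`: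
(i) `f(N[v]) ≥ 1` for at least half of the vertices, and (ii) every vertex with value `-1`
is adjacent to a vertex with value `2`. -/
noncomputable def IsMRDF [Fintype V] (G : SimpleGraph V) (f : V → ℤ) : Prop :=
  (∀ v, f v = -1 ∨ f v = 1 ∨ f v = 2) ∧
  Fintype.card V ≤ 2 * (Finset.univ.filter (fun v => 1 ≤ closedNbhdSum G f v)).card ∧
  (∀ u, f u = -1 → ∃ w, G.Adj u w ∧ f w = 2)

/-- The majority Roman domination number `γ_MR(G)`: the minimum weight
`w(f) = ∑_v f(v)` over all MRDFs `f` on `G`. -/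
noncomputable def mrdNum [Fintype V] (G : SimpleGraph V) : ℤ :=
  sInf {w : ℤ | ∃ f : V → ℤ, IsMRDF G f ∧ w = ∑ v, f v}

/-- The join `G ∨ H` of two simple graphs: disjoint union plus all edges between the parts. -/
def join {α β : Type*} (G : SimpleGraph α) (H : SimpleGraph β) : SimpleGraph (α ⊕ β) where
  Adj x y :=
    match x, y with
    | .inl a, .inl b => G.Adj a b
    | .inr a, .inr b => H.Adj a b
    | .inl _, .inr _ => True
    | .inr _, .inl _ => True
  symm := ⟨by rintro (a | a) (b | b) h <;> simp_all [SimpleGraph.adj_comm]⟩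
  loopless := ⟨by rintro (a | a) h <;> simp_all⟩

/-- The corona `G ∘ H` of two simple graphs: one copy of `G` and `|V(G)|` copies of `H`,
where the `v`-th vertex of `G` is joined to every vertex of the `v`-th copy of `H`. -/
def corona {α β : Type*} (G : SimpleGraph α) (H : SimpleGraph β) : SimpleGraph (α ⊕ α × β) where
  Adj x y :=
    match x, y with
    | .inl u, .inl v => G.Adj u v
    | .inr p, .inr q => p.1 = q.1 ∧ H.Adj p.2 q.2
    | .inl u, .inr p => u = p.1
    | .inr p, .inl u => u = p.1
  symm := ⟨by
    rintro (u | ⟨u, x⟩) (v | ⟨v, y⟩) h <;> simp_all [SimpleGraph.adj_comm, eq_comm]⟩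
  loopless := ⟨by rintro (u | ⟨u, x⟩) h <;> simp_all⟩

/-- `S` is a dominating set of `G`. -/
def IsDomSet (G : SimpleGraph V) (S : Finset V) : Prop :=
  ∀ v, v ∉ S → ∃ u ∈ S, G.Adj v u

/-- The domination number `γ(G)`. -/
noncomputable def domNum [Fintype V] (G : SimpleGraph V) : ℕ :=
  sInf {k | ∃ S : Finset V, IsDomSet G S ∧ S.card = k}

/-- A set of vertices is independent if no two of its vertices are adjacent. -/
def IsIndepSet (G : SimpleGraph V) (S : Finset V) : Prop :=
  ∀ a ∈ S, ∀ b ∈ S, ¬ G.Adj a b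

/-- The independence number `β₀(G)`. -/
noncomputable def indepNum [Fintype V] (G : SimpleGraph V) : ℕ :=
  sSup {k | ∃ S : Finset V, IsIndepSet G S ∧ S.card = k}

/-- The cocktail party graph `K_{2n} - M` (complete graph minus a perfect matching),
realized on `Fin n × Fin 2`: `(i,a)` and `(j,b)` are adjacent iff `i ≠ j`. -/
def cocktail (n : ℕ) : SimpleGraph (Fin n × Fin 2) where
  Adj x y := x.1 ≠ y.1
  symm := ⟨fun _ _ h => h.symm⟩
  loopless := ⟨fun _ h => h rfl⟩

end MRD

/-!
Cut the corona into `n` blocks, the `v`-th one consisting of `v` and its copy of `H`, and call a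
copy good if it contains a vertex `x` with `f(N[x]) ≥ 1`. The closed neighborhood of a copy vertex
stays inside its block. Raising all values by one makes them nonnegative, so the sum over a block
dominates the sum over `N[x]`; as `N[x]` has at least `δ(H) + 2` of the `m + 1` vertices of the
block, a block with a good copy weighs at least `1 + (δ(H) + 2) - (m + 1) = 2 - m + δ(H)`. Every
block weighs at least `2 - m`, because a copy vertex of value `-1` sees a `2` inside the block.
Finally, even if all `n` vertices of `G` satisfy the majority condition, `b` good copies yield at
most `n + m * b` satisfied vertices, so `n + n * m ≤ 2 * (n + m * b)`, i.e.
`b ≥ (m - 1) * n / (2 * m)`.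
-/

namespace MRD

section MRDF

variable {V : Type*} [Fintype V]

lemma closedNbhdSum_eq_add_sum_neighborFinset (G : SimpleGraph V) (f : V → ℤ) (v : V)
    [Fintype (G.neighborSet v)] :
    closedNbhdSum G f v = f v + ∑ u ∈ G.neighborFinset v, f u := by
  classical
  have hN : univ.filter (fun u => G.Adj v u ∨ u = v) = insert v (G.neighborFinset v) := by
    ext u
    simp [or_comm]
  rw [closedNbhdSum, hN, sum_insert (G.notMem_neighborFinset_self v)]

lemma closedNbhdSum_le_sum (G : SimpleGraph V) {f : V → ℤ} (hf : ∀ v, 0 ≤ f v) (v : V) :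
    closedNbhdSum G f v ≤ ∑ u, f u :=
  sum_le_sum_of_subset_of_nonneg (subset_univ _) fun u _ _ => hf u

lemma closedNbhdSum_add_one (G : SimpleGraph V) (f : V → ℤ) (v : V)
    [Fintype (G.neighborSet v)] :
    closedNbhdSum G (fun u => f u + 1) v = closedNbhdSum G f v + (G.degree v + 1) := by
  simp only [closedNbhdSum_eq_add_sum_neighborFinset, sum_add_distrib, sum_const,
    SimpleGraph.card_neighborFinset_eq_degree, nsmul_eq_mul, mul_one]
  ring

lemma sum_add_one (f : V → ℤ) : ∑ v, (f v + 1) = ∑ v, f v + Fintype.card V := by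
  simp [sum_add_distrib]

lemma closedNbhdSum_add_degree_add_one_le (G : SimpleGraph V) {f : V → ℤ} (hf : ∀ v, -1 ≤ f v)
    (v : V) [Fintype (G.neighborSet v)] :
    closedNbhdSum G f v + (G.degree v + 1) ≤ ∑ u, f u + Fintype.card V := by
  rw [← closedNbhdSum_add_one, ← sum_add_one]
  exact closedNbhdSum_le_sum G (fun u => by linarith [hf u]) v

lemma IsMRDF.neg_one_le {G : SimpleGraph V} {f : V → ℤ} (hf : IsMRDF G f) (v : V) :
    -1 ≤ f v := by
  rcases hf.1 v with h | h | h <;> omega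

lemma isMRDF_const_two (G : SimpleGraph V) : IsMRDF G fun _ => 2 := by
  classical
  have hsum (v : V) : 1 ≤ closedNbhdSum G (fun _ => 2) v := by
    rw [closedNbhdSum_eq_add_sum_neighborFinset]
    have hnonneg : 0 ≤ ∑ _u ∈ G.neighborFinset v, (2 : ℤ) := sum_nonneg fun _ _ => zero_le_two
    linarith
  refine ⟨fun _ => by simp, ?_, fun _ h => by norm_num at h⟩
  rw [filter_true_of_mem fun v _ => hsum v, card_univ]
  omega

lemma le_mrdNum {G : SimpleGraph V} {c : ℤ} (h : ∀ f, IsMRDF G f → c ≤ ∑ v, f v) :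
    c ≤ mrdNum G := by
  refine le_csInf ⟨_, _, isMRDF_const_two G, rfl⟩ ?_
  rintro _ ⟨f, hf, rfl⟩
  exact h f hf

end MRDF

section Corona

variable {α β : Type*} [Fintype β]

/-- The weight that `f` gives to the block of `v` in a corona `G ∘ H`: the vertex `v` of `G`
together with the `v`-th copy of `H`. -/
def blockWeight (f : α ⊕ α × β → ℤ) (v : α) : ℤ :=
  f (.inl v) + ∑ x, f (.inr (v, x))

lemma blockWeight_add_card (f : α ⊕ α × β → ℤ) (v : α) :
    blockWeight f v + Fintype.card β = f (.inl v) + ∑ x, (f (.inr (v, x)) + 1) := by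
  rw [blockWeight, sum_add_one, add_assoc]

variable [Fintype α] {G : SimpleGraph α} {H : SimpleGraph β} {f : α ⊕ α × β → ℤ}

lemma sum_blockWeight (f : α ⊕ α × β → ℤ) : ∑ v, blockWeight f v = ∑ z, f z := by
  simp only [blockWeight, sum_add_distrib, Fintype.sum_sum_type, Fintype.sum_prod_type]

lemma closedNbhdSum_corona_inr (G : SimpleGraph α) (H : SimpleGraph β) (f : α ⊕ α × β → ℤ)
    (v : α) (x : β) :
    closedNbhdSum (corona G H) f (.inr (v, x)) =
      f (.inl v) + closedNbhdSum H (fun y => f (.inr (v, y))) x := by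
  classical
  simp only [closedNbhdSum, sum_filter, Fintype.sum_sum_type, Fintype.sum_prod_type]
  congr 1
  · rw [Fintype.sum_eq_single v fun u hu => by simp [corona, hu]]
    simp [corona]
  · rw [Fintype.sum_eq_single v fun u hu => sum_eq_zero fun y _ => by simp [corona, hu, hu.symm]]
    simp [corona]

open scoped Classical in
/-- The vertices `v` of `G` whose copy of `H` in `G ∘ H` is good, i.e. contains a vertex `x` with
`f(N[x]) ≥ 1`. -/
noncomputable def goodCopies (G : SimpleGraph α) (H : SimpleGraph β) (f : α ⊕ α × β → ℤ) :
    Finset α :=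
  univ.filter fun v => ∃ x, 1 ≤ closedNbhdSum (corona G H) f (.inr (v, x))

lemma card_filter_one_le_closedNbhdSum_corona_le (G : SimpleGraph α) (H : SimpleGraph β)
    (f : α ⊕ α × β → ℤ) :
    (univ.filter fun z => 1 ≤ closedNbhdSum (corona G H) f z).card ≤
      Fintype.card α + (goodCopies G H f).card * Fintype.card β := by
  have hsub : (univ.filter fun z => 1 ≤ closedNbhdSum (corona G H) f z) ⊆
      univ.disjSum (goodCopies G H f ×ˢ univ) := by
    rintro (v | ⟨v, x⟩) hz
    · simp
    · simpa [goodCopies] using ⟨x, (mem_filter.mp hz).2⟩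
  simpa only [card_disjSum, card_product, card_univ] using card_le_card hsub

lemma IsMRDF.card_mul_card_le (hf : IsMRDF (corona G H) f) :
    Fintype.card α * Fintype.card β ≤
      Fintype.card α + 2 * ((goodCopies G H f).card * Fintype.card β) := by
  have hmajority := hf.2.1.trans
    (Nat.mul_le_mul_left 2 (card_filter_one_le_closedNbhdSum_corona_le G H f))
  rw [Fintype.card_sum, Fintype.card_prod] at hmajority
  omega

lemma IsMRDF.ceil_le_card_goodCopies (hf : IsMRDF (corona G H) f) (hm : 0 < Fintype.card β) :
    ⌈((Fintype.card β : ℚ) - 1) * Fintype.card α / (2 * Fintype.card β)⌉ ≤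
      ((goodCopies G H f).card : ℤ) := by
  have hcard : (Fintype.card α : ℚ) * Fintype.card β ≤
      Fintype.card α + 2 * ((goodCopies G H f).card * Fintype.card β) := by
    exact_mod_cast hf.card_mul_card_le
  rw [Int.ceil_le, Int.cast_natCast, div_le_iff₀ (by positivity)]
  linarith

lemma IsMRDF.exists_two_of_neg_one (hf : IsMRDF (corona G H) f) {v : α} {x : β}
    (hx : f (.inr (v, x)) = -1) : f (.inl v) = 2 ∨ ∃ y, f (.inr (v, y)) = 2 := by
  obtain ⟨u | ⟨u, y⟩, hadj, h2⟩ := hf.2.2 _ hx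
  · obtain rfl : u = v := hadj
    exact .inl h2
  · obtain rfl : v = u := hadj.1
    exact .inr ⟨y, h2⟩

lemma IsMRDF.two_sub_card_le_blockWeight (hf : IsMRDF (corona G H) f)
    (hm : 2 ≤ Fintype.card β) (v : α) : 2 - (Fintype.card β : ℤ) ≤ blockWeight f v := by
  rw [sub_le_iff_le_add, blockWeight_add_card]
  have hcenter : -1 ≤ f (.inl v) := hf.neg_one_le _
  have hnonneg (x : β) : 0 ≤ f (.inr (v, x)) + 1 := by linarith [hf.neg_one_le (.inr (v, x))]
  by_cases hneg : ∃ x, f (.inr (v, x)) = -1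
  · obtain ⟨x, hx⟩ := hneg
    rcases hf.exists_two_of_neg_one hx with h2 | ⟨y, h2⟩
    · linarith [sum_nonneg fun x (_ : x ∈ univ) => hnonneg x]
    · have hsingle : f (.inr (v, y)) + 1 ≤ ∑ x, (f (.inr (v, x)) + 1) :=
        single_le_sum (fun x _ => hnonneg x) (mem_univ y)
      linarith
  · have htwo (x : β) : 2 ≤ f (.inr (v, x)) + 1 := by
      rcases hf.1 (.inr (v, x)) with h | h | h
      · exact absurd ⟨x, h⟩ hneg
      all_goals omega
    have hsum : Fintype.card β * (2 : ℤ) ≤ ∑ x, (f (.inr (v, x)) + 1) := by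
      simpa using card_nsmul_le_sum univ _ 2 fun x _ => htwo x
    omega

lemma two_sub_card_add_minDegree_le_blockWeight [DecidableRel H.Adj]
    (hf : ∀ z, -1 ≤ f z) {v : α} (hv : v ∈ goodCopies G H f) :
    2 - (Fintype.card β : ℤ) + H.minDegree ≤ blockWeight f v := by
  obtain ⟨x, hx⟩ := (mem_filter.mp hv).2
  rw [closedNbhdSum_corona_inr] at hx
  have hcopy := closedNbhdSum_add_degree_add_one_le H (fun y => hf (.inr (v, y))) x
  have hdegree : (H.minDegree : ℤ) ≤ H.degree x := mod_cast H.minDegree_le_degree x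
  rw [blockWeight]
  linarith

lemma IsMRDF.le_sum_corona [DecidableRel H.Adj] (hf : IsMRDF (corona G H) f)
    (hm : 2 ≤ Fintype.card β) :
    (2 - (Fintype.card β : ℤ)) * Fintype.card α + H.minDegree * (goodCopies G H f).card ≤
      ∑ z, f z := by
  classical
  calc (2 - (Fintype.card β : ℤ)) * Fintype.card α + H.minDegree * (goodCopies G H f).card
      = ∑ v, (2 - (Fintype.card β : ℤ) +
          if v ∈ goodCopies G H f then (H.minDegree : ℤ) else 0) := by
        simp only [sum_add_distrib, sum_const, card_univ, nsmul_eq_mul, sum_ite_mem, univ_inter]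
        ring
    _ ≤ ∑ v, blockWeight f v := by
        refine sum_le_sum fun v _ => ?_
        split_ifs with hv
        · exact two_sub_card_add_minDegree_le_blockWeight hf.neg_one_le hv
        · simpa using hf.two_sub_card_le_blockWeight hm v
    _ = ∑ z, f z := sum_blockWeight f

end Corona

lemma floor_div_le_ceil_sub_one_mul_div (n : ℕ) {m : ℕ} (hm : 3 ≤ m) :
    ⌊(n : ℚ) / m⌋ ≤ ⌈((m : ℚ) - 1) * n / (2 * m)⌉ := by
  have hm' : (3 : ℚ) ≤ m := mod_cast hm
  have hle : (n : ℚ) / m ≤ ((m : ℚ) - 1) * n / (2 * m) := by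
    calc (n : ℚ) / m
        = 2 * n / (2 * m) := (mul_div_mul_left _ _ two_ne_zero).symm
      _ ≤ ((m : ℚ) - 1) * n / (2 * m) := by gcongr; linarith
  exact (Int.floor_le_ceil _).trans (Int.ceil_le_ceil hle)

end MRD

theorem mrdNum_corona_lower_general {α β : Type*} [Fintype α] [Fintype β]
    (G : SimpleGraph α) (H : SimpleGraph β) [DecidableRel H.Adj] (hm : 2 ≤ Fintype.card β) :
    (2 - (Fintype.card β : ℤ)) * Fintype.card α
        + H.minDegree * ⌈((Fintype.card β : ℚ) - 1) * Fintype.card α / (2 * Fintype.card β)⌉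
      ≤ MRD.mrdNum (MRD.corona G H) := by
  refine MRD.le_mrdNum fun f hf => le_trans ?_ (hf.le_sum_corona hm)
  gcongr
  exact hf.ceil_le_card_goodCopies (by omega)

/-- Let `G` have order `n ≥ 1` and let `H` be connected of order `m` with `δ(H) ≥ 2`.
Then `(2 - m)·n + 2·⌊n/m⌋ ≤ γ_MR(G ∘ H)`. -/
theorem mrdNum_corona_lower {α β : Type*} [Fintype α] [Fintype β]
    (G : SimpleGraph α) (H : SimpleGraph β) [DecidableRel H.Adj]
    (hn : 1 ≤ Fintype.card α) (hH : H.Connected) (hδ : 2 ≤ H.minDegree) :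
    (2 - (Fintype.card β : ℤ)) * Fintype.card α
        + 2 * ⌊(Fintype.card α : ℚ) / Fintype.card β⌋
      ≤ MRD.mrdNum (MRD.corona G H) := by
  have := hH.nonempty
  have hm : 3 ≤ Fintype.card β := hδ.trans_lt H.minDegree_lt_card
  refine le_trans ?_ (mrdNum_corona_lower_general G H (by omega))
  gcongr
  · exact mod_cast hδ
  · exact MRD.floor_div_le_ceil_sub_one_mul_div _ hm
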